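/- Let n ≥ 1, let A ∈ M_n(ℝ) be Hurwitz, let N > 0 and Ξ > 0 be real numbers, and suppose that for every ω ∈ ℝ, σ_min(A − iωI) > Ξ√N, where A is regarded as a complex n×n matrix. Then there exist a real number ε > 0 and a symmetric positive definite matrix P ∈ M_n(ℝ) such that AᵀP + PA + N·P² + (Ξ² + ε)·I = 0. -/

import Mathlib

open Matrix

/-- A real square matrix is Hurwitz if every eigenvalue of it, regarded as a complex
matrix, has strictly negative real part. -/
def IsHurwitz {n : ℕ} (A : Matrix (Fin n) (Fin n) ℝ) : Prop :=
  ∀ μ ∈ spectrum ℂ (A.map Complex.ofReal), μ.re < 0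

/-- The smallest singular value of a complex matrix: the infimum of `‖M v‖` over
unit vectors `v ∈ ℂ^n`. -/
noncomputable def sigmaMin {n : ℕ} (M : Matrix (Fin n) (Fin n) ℂ) : ℝ :=
  sInf {r : ℝ | ∃ v : EuclideanSpace ℂ (Fin n), ‖v‖ = 1 ∧ r = ‖Matrix.toEuclideanLin M v‖}

/-!
Rescaling `P` turns the equation into `AᵀX + XA + X² + c = 0` with `c = N(Ξ² + ε)`. If `X` solves it
and `A + X` is Hurwitz, the derivative of the left-hand side at `X` is the Lyapunov operator of
`A + X`, which is injective since `A + X` and `-(A + X)` share no eigenvalue; so such solutions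
persist when `c` varies a little. They also persist in the limit: completing the square gives
`(A + X)ᵀ(A + X) = AᵀA - c`, which bounds `A + X`, and the same identity for `A - iω` shows that
`A + X` has no eigenvalue on the imaginary axis as long as `√c < σ_min(A - iω)` for all `ω`.
Continuous induction starting from `X = 0`, `c = 0` reaches `c = NΞ²` and slightly beyond.

For positivity, `AᵀX + XA = -(c + X²)` is negative definite. The matrices `M` for which `MᵀX + XM`
is negative definite form a convex set, contain `A` and `-X`, and have no imaginary eigenvalue, so
`-X` is Hurwitz because `A` is.
-/

open Polynomial Filter
open scoped Topology ComplexOrder MatrixOrder Matrix.Norms.L2Operator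

section StarRing

variable {R S : Type*} [Ring R] [StarRing R] [Ring S] [StarRing S]

/-- The Lyapunov operator `x ↦ a* x + x a`. -/
def lyapunov (a x : R) : R :=
  star a * x + x * a

/-- The left-hand side `a* x + x a + x²` of the algebraic Riccati equation, whose coefficient of
`x²` is normalized to one by rescaling `x`. -/
def riccati (a x : R) : R :=
  lyapunov a x + x * x

theorem map_lyapunov (f : R →+* S) (hf : ∀ a, f (star a) = star (f a)) (a x : R) :
    f (lyapunov a x) = lyapunov (f a) (f x) := by
  simp only [lyapunov, map_add, map_mul, hf]

theorem map_riccati (f : R →+* S) (hf : ∀ a, f (star a) = star (f a)) (a x : R) :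
    f (riccati a x) = riccati (f a) (f x) := by
  simp only [riccati, map_add, map_mul, map_lyapunov f hf]

theorem star_riccati (a x : R) : star (riccati a x) = riccati a (star x) := by
  simp only [riccati, lyapunov, star_add, star_mul, star_star]
  abel

theorem riccati_sub_riccati_star (a x : R) :
    riccati a x - riccati a (star x) = lyapunov (a + x) (x - star x) := by
  simp only [riccati, lyapunov, star_add]
  noncomm_ring

theorem star_add_mul_add_self_eq (a : R) {x : R} (hx : IsSelfAdjoint x) :
    star (a + x) * (a + x) = star a * a + riccati a x := by
  simp only [riccati, lyapunov, star_add, hx.star_eq]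
  noncomm_ring

theorem riccati_sub_of_commute (a : R) {b x : R} (hb : star b = -b) (hbx : Commute b x) :
    riccati (a - b) x = riccati a x := by
  simp only [riccati, lyapunov, star_sub, hb, sub_mul, mul_sub, neg_mul, hbx.eq]
  abel

end StarRing

theorem continuous_riccati {R : Type*} [Ring R] [StarRing R] [TopologicalSpace R]
    [IsTopologicalRing R] (a : R) : Continuous (riccati a) := by
  unfold riccati lyapunov
  fun_prop

theorem map_nhds_eq_of_injective_fderiv {𝕜 E : Type*} [RCLike 𝕜] [NormedAddCommGroup E]
    [NormedSpace 𝕜 E] [FiniteDimensional 𝕜 E] {f : E → E} {f' : E →L[𝕜] E} {x : E}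
    (hf : HasStrictFDerivAt f f' x) (hf' : Function.Injective f') :
    map f (𝓝 x) = 𝓝 (f x) := by
  have : CompleteSpace E := FiniteDimensional.complete 𝕜 E
  exact hf.map_nhds_eq_of_surj
    (LinearMap.range_eq_top.2 (LinearMap.injective_iff_surjective.1 hf'))

theorem hasStrictFDerivAt_riccati {R : Type*} [NormedRing R] [StarRing R] [NormedAlgebra ℝ R]
    (a x : R) :
    HasStrictFDerivAt (riccati a)
      (ContinuousLinearMap.mul ℝ R (star a + x) + (ContinuousLinearMap.mul ℝ R).flip (a + x))
      x := by
  have hid := hasStrictFDerivAt_id (𝕜 := ℝ) x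
  refine ((((hasStrictFDerivAt_const (star a) x).mul' hid).add
    (hid.mul' (hasStrictFDerivAt_const a x))).add (hid.mul' hid)).congr_fderiv ?_
  ext h
  simp only [id_eq, smul_zero, add_zero, zero_add, _root_.add_apply, _root_.smul_apply, map_add,
    ContinuousLinearMap.id_apply, ContinuousLinearMap.mul_apply', ContinuousLinearMap.flip_apply,
    smul_eq_mul, MulOpposite.smul_eq_mul_unop, MulOpposite.unop_op]
  abel

section Sylvester

variable {R m n : Type*} [CommRing R] [Fintype m] [DecidableEq m] [Fintype n] [DecidableEq n]
  {A : Matrix m m R} {B : Matrix n n R} {X : Matrix m n R}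

theorem pow_mul_eq_mul_pow_of_mul_eq_mul (h : A * X = X * B) (k : ℕ) : A ^ k * X = X * B ^ k := by
  induction k with
  | zero => simp
  | succ k ih =>
    rw [pow_succ, pow_succ, Matrix.mul_assoc, h, ← Matrix.mul_assoc, ih, Matrix.mul_assoc]

theorem aeval_mul_eq_mul_aeval_of_mul_eq_mul (h : A * X = X * B) (p : R[X]) :
    aeval A p * X = X * aeval B p := by
  induction p using Polynomial.induction_on' with
  | add p q hp hq => simp only [map_add, Matrix.add_mul, Matrix.mul_add, hp, hq]
  | monomial k r =>
    simp [aeval_monomial, Algebra.algebraMap_eq_smul_one, pow_mul_eq_mul_pow_of_mul_eq_mul h]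

theorem eq_zero_of_mul_eq_mul_of_isCoprime_charpoly (h : A * X = X * B)
    (hAB : IsCoprime A.charpoly B.charpoly) : X = 0 := by
  obtain ⟨u, v, huv⟩ := hAB
  have hB : aeval B A.charpoly * aeval B u = 1 := by
    simpa [mul_comm u, aeval_self_charpoly] using congrArg (aeval B) huv
  calc
    X = X * aeval B A.charpoly * aeval B u := by rw [Matrix.mul_assoc, hB, Matrix.mul_one]
    _ = aeval A A.charpoly * X * aeval B u := by rw [aeval_mul_eq_mul_aeval_of_mul_eq_mul h]
    _ = 0 := by rw [aeval_self_charpoly, Matrix.zero_mul, Matrix.zero_mul]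

end Sylvester

section Spectrum

variable {ι : Type*} [Fintype ι] [DecidableEq ι]

theorem mem_spectrum_iff_exists_mulVec_eq_smul {K : Type*} [Field K] {M : Matrix ι ι K} {μ : K} :
    μ ∈ spectrum K M ↔ ∃ v ≠ 0, M *ᵥ v = μ • v := by
  simp only [← Matrix.spectrum_toLin', ← Module.End.hasEigenvalue_iff_mem_spectrum,
    Module.End.hasEigenvalue_iff, Submodule.ne_bot_iff, Module.End.mem_eigenspace_iff,
    toLin'_apply, and_comm, ne_eq]

theorem mem_spectrum_map_ofReal_iff {A : Matrix ι ι ℝ} {μ : ℂ} :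
    μ ∈ spectrum ℂ (A.map Complex.ofReal) ↔ aeval μ A.charpoly = 0 := by
  rw [mem_spectrum_iff_isRoot_charpoly, IsRoot, ← eval_map_algebraMap, ← charpoly_map]
  rfl

theorem pow_card_le_norm_eval_charpoly {K : Type*} [NormedField K] [IsAlgClosed K]
    {M : Matrix ι ι K} {z : K} {r : ℝ} (hr : 0 ≤ r) (h : ∀ μ ∈ spectrum K M, r ≤ ‖z - μ‖) :
    r ^ Fintype.card ι ≤ ‖M.charpoly.eval z‖ := by
  have hsplits : M.charpoly.Splits := IsAlgClosed.splits _
  calc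
    r ^ Fintype.card ι = (M.charpoly.roots.map fun _ => r).prod := by
      rw [Multiset.map_const', Multiset.prod_replicate, ← hsplits.natDegree_eq_card_roots,
        charpoly_natDegree_eq_dim]
    _ ≤ (M.charpoly.roots.map fun μ => ‖z - μ‖).prod :=
      Multiset.prod_map_le_prod_map₀ _ _ (fun _ _ => hr) fun μ hμ =>
        h μ (mem_spectrum_iff_isRoot_charpoly.2 (isRoot_of_mem_roots hμ))
    _ = ‖M.charpoly.eval z‖ := by
      rw [hsplits.eval_eq_prod_roots_of_monic M.charpoly_monic, ← normHom_apply,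
        map_multiset_prod, Multiset.map_map]
      rfl

end Spectrum

section RCLike

variable {𝕜 ι : Type*} [RCLike 𝕜] [Fintype ι] [DecidableEq ι]

theorem norm_sq_toEuclideanLin {κ : Type*} [Fintype κ] (M : Matrix κ ι 𝕜)
    (v : EuclideanSpace 𝕜 ι) :
    ‖toEuclideanLin M v‖ ^ 2 = RCLike.re (inner 𝕜 v (toEuclideanLin (Mᴴ * M) v)) := by
  classical
  rw [← inner_self_eq_norm_sq (𝕜 := 𝕜), ← LinearMap.adjoint_inner_right,
    ← toEuclideanLin_conjTranspose_eq_adjoint]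
  simp [toLpLin_apply]

theorem norm_sq_toEuclideanLin_add_of_riccati_eq {M X : Matrix ι ι 𝕜} (hX : X.IsHermitian) {c : ℝ}
    (h : riccati M X = -((c : 𝕜) • 1)) (v : EuclideanSpace 𝕜 ι) :
    ‖toEuclideanLin (M + X) v‖ ^ 2 = ‖toEuclideanLin M v‖ ^ 2 - c * ‖v‖ ^ 2 := by
  have hc : toEuclideanLin ((c : 𝕜) • (1 : Matrix ι ι 𝕜)) v = (c : 𝕜) • v := by
    rw [map_smul, toLpLin_one, LinearMap.smul_apply, LinearMap.id_apply]
  rw [norm_sq_toEuclideanLin, norm_sq_toEuclideanLin, ← star_eq_conjTranspose,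
    ← star_eq_conjTranspose, star_add_mul_add_self_eq M hX, h, ← sub_eq_add_neg, map_sub,
    LinearMap.sub_apply, hc, inner_sub_right, inner_smul_right, map_sub,
    RCLike.re_ofReal_mul, inner_self_eq_norm_sq]

theorem norm_add_le_of_riccati_eq {A X : Matrix ι ι 𝕜} {c : ℝ} (hc : 0 ≤ c)
    (hX : X.IsHermitian) (h : riccati A X = -((c : 𝕜) • 1)) : ‖A + X‖ ≤ ‖A‖ := by
  refine l2_opNorm_def (A + X) ▸ ContinuousLinearMap.opNorm_le_bound _ (norm_nonneg A) fun v => ?_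
  have hsq : ‖toEuclideanLin (A + X) v‖ ^ 2 ≤ ‖toEuclideanLin A v‖ ^ 2 := by
    rw [norm_sq_toEuclideanLin_add_of_riccati_eq hX h]
    exact sub_le_self _ (by positivity)
  exact (le_of_sq_le_sq hsq (norm_nonneg _)).trans (l2_opNorm_mulVec A v)

theorem re_ne_zero_of_posDef_neg_lyapunov {M P : Matrix ι ι 𝕜} (h : (-lyapunov M P).PosDef) {μ : 𝕜}
    (hμ : μ ∈ spectrum 𝕜 M) : RCLike.re μ ≠ 0 := by
  obtain ⟨v, hv, hMv⟩ := mem_spectrum_iff_exists_mulVec_eq_smul.1 hμ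
  intro hre
  have hquad : star v ⬝ᵥ (lyapunov M P *ᵥ v) = (star μ + μ) * (star v ⬝ᵥ (P *ᵥ v)) := by
    rw [lyapunov, star_eq_conjTranspose, add_mulVec, dotProduct_add, ← mulVec_mulVec,
      ← mulVec_mulVec, hMv, dotProduct_mulVec, ← star_mulVec, hMv]
    simp [mulVec_smul, add_mul]
  have hpos := h.re_dotProduct_pos hv
  simp [neg_mulVec, hquad, hre] at hpos

theorem convex_setOf_posDef_neg_lyapunov (P : Matrix ι ι 𝕜) :
    Convex ℝ {M | (-lyapunov M P).PosDef} := by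
  refine convex_iff_forall_pos.2 fun M hM M' hM' a b ha hb _ => ?_
  have hcomb : -lyapunov (a • M + b • M') P = a • -lyapunov M P + b • -lyapunov M' P := by
    simp only [lyapunov, star_add, star_smul, star_trivial, add_mul, mul_add, smul_mul_assoc,
      mul_smul_comm, smul_neg, smul_add]
    abel
  rw [Set.mem_ofPred_eq, hcomb]
  exact (hM.smul ha).add (hM'.smul hb)

theorem mulVec_injective_of_posDef_neg_lyapunov {A P : Matrix ι ι 𝕜} (hP : P.IsHermitian)
    (hA : (-lyapunov A P).PosDef) : Function.Injective P.mulVec := by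
  refine (injective_iff_map_eq_zero P.mulVecLin).2 fun x hx => ?_
  by_contra hx0
  have hPx : P *ᵥ x = 0 := hx
  have hxP : star x ᵥ* P = 0 := by rw [← hP.eq, ← star_mulVec, hPx, star_zero]
  have hquad : star x ⬝ᵥ (lyapunov A P *ᵥ x) = 0 := by
    rw [lyapunov, add_mulVec, ← mulVec_mulVec, ← mulVec_mulVec, hPx, mulVec_zero, zero_add,
      dotProduct_mulVec, hxP, zero_dotProduct]
  have hpos := hA.dotProduct_mulVec_pos hx0
  rw [neg_mulVec, dotProduct_neg, hquad, neg_zero] at hpos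
  exact hpos.false

theorem posDef_neg_lyapunov_neg_self {A P : Matrix ι ι 𝕜} (hP : P.IsHermitian)
    (hA : (-lyapunov A P).PosDef) : (-lyapunov (-P) P).PosDef := by
  have hsq : -lyapunov (-P) P = Pᴴ * P + Pᴴ * P := by
    rw [lyapunov, star_neg, star_eq_conjTranspose, hP.eq, neg_mul, mul_neg, neg_add, neg_neg]
  have hpos := PosDef.conjTranspose_mul_self P (mulVec_injective_of_posDef_neg_lyapunov hP hA)
  rw [hsq]
  exact hpos.add hpos

end RCLike

theorem conjTranspose_map_ofReal {m n : Type*} (M : Matrix m n ℝ) :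
    Mᴴ.map Complex.ofReal = (M.map Complex.ofReal)ᴴ :=
  conjTranspose_map _ fun r => (Complex.conj_ofReal r).symm

theorem posDef_map_ofReal {ι : Type*} [Finite ι] {Q : Matrix ι ι ℝ} (hQ : Q.PosDef) :
    (Q.map Complex.ofReal).PosDef := by
  classical
  have := Fintype.ofFinite ι
  have hunit : IsUnit (Q.map Complex.ofReal) := hQ.isUnit.map Complex.ofRealHom.mapMatrix
  obtain ⟨B, hB⟩ := CStarAlgebra.nonneg_iff_eq_star_mul_self.1 hQ.posSemidef.nonneg
  have hfactor : Q.map Complex.ofReal = (B.map Complex.ofReal)ᴴ * B.map Complex.ofReal := by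
    rw [hB, star_eq_conjTranspose, ← conjTranspose_map_ofReal]
    exact Matrix.map_mul (f := Complex.ofRealHom)
  rw [hfactor] at hunit ⊢
  exact (posSemidef_conjTranspose_mul_self _).posDef_iff_isUnit.2 hunit

theorem map_ofReal_lyapunov {ι : Type*} [Fintype ι] [DecidableEq ι] (M X : Matrix ι ι ℝ) :
    (lyapunov M X).map Complex.ofReal = lyapunov (M.map Complex.ofReal) (X.map Complex.ofReal) :=
  map_lyapunov Complex.ofRealHom.mapMatrix conjTranspose_map_ofReal M X

theorem map_ofReal_riccati {ι : Type*} [Fintype ι] [DecidableEq ι] (M X : Matrix ι ι ℝ) :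
    (riccati M X).map Complex.ofReal = riccati (M.map Complex.ofReal) (X.map Complex.ofReal) :=
  map_riccati Complex.ofRealHom.mapMatrix conjTranspose_map_ofReal M X

section Hurwitz

variable {n : ℕ} {A B P X : Matrix (Fin n) (Fin n) ℝ}

theorem IsHurwitz.isCoprime_charpoly_neg (hA : IsHurwitz A) :
    IsCoprime A.charpoly (-A).charpoly := by
  rw [isCoprime_iff_aeval_ne_zero_of_isAlgClosed ℝ ℂ]
  intro μ
  simp only [ne_eq, ← mem_spectrum_map_ofReal_iff, ← not_and_or]
  rintro ⟨hμ, hμ_neg⟩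
  rw [Matrix.map_neg _ Complex.ofReal_neg, ← spectrum.neg_eq, Set.mem_neg] at hμ_neg
  have hre_neg : (-μ).re < 0 := hA (-μ) hμ_neg
  rw [Complex.neg_re] at hre_neg
  linarith [hA μ hμ]

theorem IsHurwitz.eq_zero_of_lyapunov_eq_zero (hA : IsHurwitz A) (hX : lyapunov A X = 0) :
    X = 0 := by
  have h : Aᵀ * X = X * -A := by
    rw [mul_neg, ← conjTranspose_eq_transpose_of_trivial]
    exact eq_neg_of_add_eq_zero_left hX
  refine eq_zero_of_mul_eq_mul_of_isCoprime_charpoly h ?_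
  rw [charpoly_transpose]
  exact hA.isCoprime_charpoly_neg

theorem IsHurwitz.neg_of_mem_spectrum (hA : IsHurwitz A) {r : ℝ} (hr : r ∈ spectrum ℝ A) :
    r < 0 := by
  refine hA r (mem_spectrum_map_ofReal_iff.2 ?_)
  rw [mem_spectrum_iff_isRoot_charpoly, IsRoot] at hr
  change aeval (algebraMap ℝ ℂ r) A.charpoly = 0
  rw [aeval_algebraMap_apply, coe_aeval_eq_eval, hr, map_zero]

theorem posDef_of_isHurwitz_neg (hP : P.IsHermitian) (h : IsHurwitz (-P)) : P.PosDef := by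
  refine hP.posDef_iff_eigenvalues_pos.2 fun i => ?_
  have hmem : -hP.eigenvalues i ∈ spectrum ℝ (-P) := by
    rw [← spectrum.neg_eq, Set.neg_mem_neg]
    exact hP.eigenvalues_mem_spectrum_real i
  exact neg_neg_iff_pos.1 (h.neg_of_mem_spectrum hmem)

theorem continuous_map_ofReal {m n : Type*} :
    Continuous fun M : Matrix m n ℝ => M.map Complex.ofReal :=
  continuous_id.matrix_map Complex.continuous_ofReal

theorem isOpen_setOf_isHurwitz : IsOpen {M : Matrix (Fin n) (Fin n) ℝ | IsHurwitz M} := by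
  have : CompleteSpace (Matrix (Fin n) (Fin n) ℂ) := FiniteDimensional.complete ℂ _
  have hleft : IsOpen {z : ℂ | z.re < 0} := isOpen_lt Complex.continuous_re continuous_const
  exact (upperHemicontinuous_iff_isOpen_preimage_Iic.1
    (upperHemicontinuous_spectrum ℂ (Matrix (Fin n) (Fin n) ℂ)) _ hleft).preimage
    continuous_map_ofReal

theorem re_nonpos_of_mem_closure_isHurwitz (hA : A ∈ closure {M | IsHurwitz M}) {μ : ℂ}
    (hμ : μ ∈ spectrum ℂ (A.map Complex.ofReal)) : μ.re ≤ 0 := by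
  by_contra! hpos
  have hbound (M : Matrix (Fin n) (Fin n) ℝ) (hM : IsHurwitz M) :
      μ.re ^ n ≤ ‖(M.map Complex.ofReal).charpoly.eval μ‖ := by
    have hdist (z : ℂ) (hz : z ∈ spectrum ℂ (M.map Complex.ofReal)) : μ.re ≤ ‖μ - z‖ :=
      calc
        μ.re ≤ (μ - z).re := by rw [Complex.sub_re]; linarith [hM z hz]
        _ ≤ ‖μ - z‖ := Complex.re_le_norm _
    simpa only [Fintype.card_fin] using pow_card_le_norm_eval_charpoly hpos.le hdist
  have hcont : Continuous fun M : Matrix (Fin n) (Fin n) ℝ =>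
      ‖(M.map Complex.ofReal).charpoly.eval μ‖ := by
    simp only [eval_charpoly]
    exact (continuous_const.sub continuous_map_ofReal).matrix_det.norm
  have hlimit : μ.re ^ n ≤ ‖(A.map Complex.ofReal).charpoly.eval μ‖ :=
    closure_minimal hbound (isClosed_le continuous_const hcont) hA
  rw [mem_spectrum_iff_isRoot_charpoly.1 hμ, norm_zero] at hlimit
  exact (pow_pos hpos n).not_ge hlimit

theorem isHurwitz_of_mem_closure (hA : A ∈ closure {M | IsHurwitz M})
    (himag : ∀ μ ∈ spectrum ℂ (A.map Complex.ofReal), μ.re ≠ 0) : IsHurwitz A := fun μ hμ =>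
  (re_nonpos_of_mem_closure_isHurwitz hA hμ).lt_of_ne (himag μ hμ)

theorem isHurwitz_of_isPreconnected {s : Set (Matrix (Fin n) (Fin n) ℝ)} (hs : IsPreconnected s)
    (himag : ∀ M ∈ s, ∀ μ ∈ spectrum ℂ (M.map Complex.ofReal), μ.re ≠ 0)
    (hAs : A ∈ s) (hA : IsHurwitz A) (hBs : B ∈ s) : IsHurwitz B :=
  hs.subset_of_closure_inter_subset isOpen_setOf_isHurwitz ⟨A, hAs, hA⟩
    (fun M hM => isHurwitz_of_mem_closure hM.1 (himag M hM.2)) hBs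

theorem IsHurwitz.posDef_of_posDef_neg_lyapunov (hA : IsHurwitz A) (hP : P.IsHermitian)
    (h : (-lyapunov A P).PosDef) : P.PosDef := by
  refine posDef_of_isHurwitz_neg hP (isHurwitz_of_isPreconnected
    (convex_setOf_posDef_neg_lyapunov P).isPreconnected ?_ h hA (posDef_neg_lyapunov_neg_self hP h))
  intro M hM μ hμ
  have hmap : (-lyapunov M P).map Complex.ofReal =
      -lyapunov (M.map Complex.ofReal) (P.map Complex.ofReal) := by
    rw [Matrix.map_neg _ Complex.ofReal_neg, map_ofReal_lyapunov]
  exact re_ne_zero_of_posDef_neg_lyapunov (hmap ▸ posDef_map_ofReal hM) hμ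

end Hurwitz

section Riccati

variable {n : ℕ}

theorem sigmaMin_mul_norm_le (M : Matrix (Fin n) (Fin n) ℂ) (v : EuclideanSpace ℂ (Fin n)) :
    sigmaMin M * ‖v‖ ≤ ‖toEuclideanLin M v‖ := by
  rcases eq_or_ne v 0 with rfl | hv
  · simp
  have hunit : ‖((‖v‖⁻¹ : ℝ) : ℂ) • v‖ = 1 := by
    rw [norm_smul, Complex.norm_real, norm_inv, norm_norm, inv_mul_cancel₀ (norm_ne_zero_iff.2 hv)]
  have hle : sigmaMin M ≤ ‖toEuclideanLin M (((‖v‖⁻¹ : ℝ) : ℂ) • v)‖ :=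
    csInf_le ⟨0, by rintro _ ⟨w, _, rfl⟩; exact norm_nonneg _⟩ ⟨_, hunit, rfl⟩
  rwa [map_smul, norm_smul, Complex.norm_real, norm_inv, norm_norm, inv_mul_eq_div,
    le_div_iff₀ (norm_pos_iff.2 hv)] at hle

theorem riccati_sub_mul_I_smul_one {ι : Type*} [Fintype ι] [DecidableEq ι] (M X : Matrix ι ι ℂ)
    (ω : ℝ) : riccati (M - ((ω : ℂ) * Complex.I) • 1) X = riccati M X :=
  riccati_sub_of_commute M (by simp [star_smul]) ((Commute.one_left X).smul_left _)

-- If `(M + X) v = iω v`, completing the square gives `‖(M - iω) v‖² = c ‖v‖²`.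
theorem re_ne_zero_of_sqrt_lt_sigmaMin {M X : Matrix (Fin n) (Fin n) ℂ} {c : ℝ}
    (hX : X.IsHermitian) (h : riccati M X = -((c : ℂ) • 1))
    (hdist : ∀ ω : ℝ, √c < sigmaMin (M - ((ω : ℂ) * Complex.I) • 1)) {μ : ℂ}
    (hμ : μ ∈ spectrum ℂ (M + X)) : μ.re ≠ 0 := by
  intro hre
  obtain ⟨v, hv, hMv⟩ := mem_spectrum_iff_exists_mulVec_eq_smul.1 hμ
  have hμ_eq : (μ.im : ℂ) * Complex.I = μ := Complex.ext (by simp [hre]) (by simp)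
  set Mω := M - ((μ.im : ℂ) * Complex.I) • (1 : Matrix (Fin n) (Fin n) ℂ) with hMω
  set w : EuclideanSpace ℂ (Fin n) := WithLp.toLp 2 v
  have hw : 0 < ‖w‖ := by simpa [w] using hv
  have hker : toEuclideanLin (Mω + X) w = 0 := by
    have : (Mω + X) *ᵥ v = 0 := by
      rw [hMω, hμ_eq, sub_add_eq_add_sub, sub_mulVec, hMv, smul_mulVec, one_mulVec, sub_self]
    exact congrArg (WithLp.toLp 2) this
  have hnorm : ‖toEuclideanLin Mω w‖ ^ 2 = c * ‖w‖ ^ 2 := by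
    have hric : riccati Mω X = -((c : ℂ) • 1) := (riccati_sub_mul_I_smul_one M X μ.im).trans h
    have := norm_sq_toEuclideanLin_add_of_riccati_eq hX hric w
    rw [hker, norm_zero] at this
    linarith
  have hσ := hdist μ.im
  have hlt : c * ‖w‖ ^ 2 < (sigmaMin Mω * ‖w‖) ^ 2 := by
    rw [mul_pow]
    exact mul_lt_mul_of_pos_right (Real.lt_sq_of_sqrt_lt hσ) (pow_pos hw 2)
  have hle : (sigmaMin Mω * ‖w‖) ^ 2 ≤ ‖toEuclideanLin Mω w‖ ^ 2 :=
    pow_le_pow_left₀ (mul_nonneg ((Real.sqrt_nonneg c).trans hσ.le) hw.le)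
      (sigmaMin_mul_norm_le Mω w) 2
  linarith

theorem re_ne_zero_of_sqrt_lt_sigmaMin_map_ofReal {A X : Matrix (Fin n) (Fin n) ℝ} {c : ℝ}
    (hX : X.IsHermitian) (h : riccati A X = -(c • 1))
    (hdist : ∀ ω : ℝ, √c < sigmaMin (A.map Complex.ofReal - ((ω : ℂ) * Complex.I) • 1)) {μ : ℂ}
    (hμ : μ ∈ spectrum ℂ ((A + X).map Complex.ofReal)) : μ.re ≠ 0 := by
  rw [Matrix.map_add _ Complex.ofReal_add] at hμ
  refine re_ne_zero_of_sqrt_lt_sigmaMin ?_ ?_ hdist hμ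
  · rw [IsHermitian, ← conjTranspose_map_ofReal, hX.eq]
  · rw [← map_ofReal_riccati, h]
    ext i j
    rcases eq_or_ne i j with rfl | hij <;> simp [*]

/-- `X` is the stabilizing solution of the Riccati equation `Aᵀ X + X A + X² + c • 1 = 0`: its
closed-loop matrix `A + X` is Hurwitz. Symmetry of `X` is not assumed, since it follows. -/
structure IsStabilizingSolution (A X : Matrix (Fin n) (Fin n) ℝ) (c : ℝ) : Prop where
  isHurwitz : IsHurwitz (A + X)
  riccati_eq : riccati A X = -(c • 1)

variable {A X : Matrix (Fin n) (Fin n) ℝ} {c : ℝ}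

theorem IsHurwitz.isStabilizingSolution_zero (hA : IsHurwitz A) : IsStabilizingSolution A 0 0 where
  isHurwitz := by rwa [add_zero]
  riccati_eq := by simp [riccati, lyapunov]

theorem IsStabilizingSolution.isHermitian (h : IsStabilizingSolution A X c) : X.IsHermitian := by
  have hstar : riccati A (star X) = riccati A X := by
    rw [← star_riccati, h.riccati_eq, star_neg, star_smul, star_one, star_trivial]
  have hlyap : lyapunov (A + X) (X - star X) = 0 := by
    rw [← riccati_sub_riccati_star, hstar, sub_self]
  exact (sub_eq_zero.1 (h.isHurwitz.eq_zero_of_lyapunov_eq_zero hlyap)).symm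

theorem IsStabilizingSolution.posDef (h : IsStabilizingSolution A X c) (hA : IsHurwitz A)
    (hc : 0 < c) : X.PosDef := by
  have hlyap : -lyapunov A X = c • 1 + Xᴴ * X := by
    rw [h.isHermitian.eq, ← sub_eq_iff_eq_add, ← neg_inj, ← h.riccati_eq, riccati]
    abel
  refine hA.posDef_of_posDef_neg_lyapunov h.isHermitian (hlyap ▸ ?_)
  exact (PosDef.one.smul hc).add_posSemidef (posSemidef_conjTranspose_mul_self X)

theorem IsStabilizingSolution.eventually_exists (h : IsStabilizingSolution A X c) :
    ∀ᶠ d in 𝓝 c, ∃ Y, IsStabilizingSolution A Y d := by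
  have hinj : Function.Injective (ContinuousLinearMap.mul ℝ (Matrix (Fin n) (Fin n) ℝ) (star A + X)
      + (ContinuousLinearMap.mul ℝ _).flip (A + X)) := by
    refine (injective_iff_map_eq_zero _).2 fun Y hY => h.isHurwitz.eq_zero_of_lyapunov_eq_zero ?_
    rw [lyapunov, star_add, h.isHermitian.isSelfAdjoint.star_eq]
    exact hY
  have hnhds : riccati A '' {Y | IsHurwitz (A + Y)} ∈ 𝓝 (riccati A X) := by
    rw [← map_nhds_eq_of_injective_fderiv (hasStrictFDerivAt_riccati A X) hinj]
    exact image_mem_map ((isOpen_setOf_isHurwitz.preimage (continuous_const_add A)).mem_nhds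
      h.isHurwitz)
  have hcont : Continuous fun d : ℝ => -(d • (1 : Matrix (Fin n) (Fin n) ℝ)) := by fun_prop
  rw [h.riccati_eq] at hnhds
  filter_upwards [hcont.continuousAt hnhds] with d hd
  obtain ⟨Y, hY, hYd⟩ := hd
  exact ⟨Y, hY, hYd⟩

theorem isClosed_setOf_exists_isStabilizingSolution_inter_Icc
    (hdist : ∀ ω : ℝ, √c < sigmaMin (A.map Complex.ofReal - ((ω : ℂ) * Complex.I) • 1)) :
    IsClosed ({d | ∃ X, IsStabilizingSolution A X d} ∩ Set.Icc 0 c) := by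
  let K : Set (ℝ × Matrix (Fin n) (Fin n) ℝ) := {p | p.1 ∈ Set.Icc 0 c ∧ p.2.IsHermitian ∧
    A + p.2 ∈ closure {M | IsHurwitz M} ∧ riccati A p.2 = -(p.1 • 1)}
  have hbounded : K ⊆ Set.Icc 0 c ×ˢ Metric.closedBall (-A) ‖A‖ := fun p ⟨hp, hX, _, hric⟩ =>
    ⟨hp, by
      rw [mem_closedBall_iff_norm, sub_neg_eq_add, add_comm]
      exact norm_add_le_of_riccati_eq hp.1 hX hric⟩
  have hclosed : IsClosed K :=
    (isClosed_Icc.preimage continuous_fst).inter <|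
      (isClosed_eq continuous_snd.matrix_conjTranspose continuous_snd).inter <|
      (isClosed_closure.preimage (continuous_const.add continuous_snd)).inter <|
      isClosed_eq ((continuous_riccati A).comp continuous_snd) (by fun_prop)
  have : ProperSpace (Matrix (Fin n) (Fin n) ℝ) := FiniteDimensional.proper ℝ _
  have hcompact : IsCompact K :=
    (isCompact_Icc.prod (isCompact_closedBall _ _)).of_isClosed_subset hclosed hbounded
  convert (hcompact.image continuous_fst).isClosed using 1
  ext d
  constructor
  · rintro ⟨⟨X, hX⟩, hd⟩
    exact ⟨(d, X), ⟨hd, hX.isHermitian, subset_closure hX.isHurwitz, hX.riccati_eq⟩, rfl⟩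
  · rintro ⟨⟨d, X⟩, ⟨hd, hX, hclosure, hric⟩, rfl⟩
    refine ⟨⟨X, isHurwitz_of_mem_closure hclosure fun μ hμ => ?_, hric⟩, hd⟩
    exact re_ne_zero_of_sqrt_lt_sigmaMin_map_ofReal hX hric
      (fun ω => (Real.sqrt_le_sqrt hd.2).trans_lt (hdist ω)) hμ

theorem IsHurwitz.exists_isStabilizingSolution (hA : IsHurwitz A) (hc : 0 ≤ c)
    (hdist : ∀ ω : ℝ, √c < sigmaMin (A.map Complex.ofReal - ((ω : ℂ) * Complex.I) • 1)) :
    ∃ X, IsStabilizingSolution A X c :=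
  IsClosed.Icc_subset_of_forall_mem_nhdsWithin
    (isClosed_setOf_exists_isStabilizingSolution_inter_Icc hdist) ⟨0, hA.isStabilizingSolution_zero⟩
    (fun _ ⟨⟨_, hX⟩, _⟩ => mem_nhdsWithin_of_mem_nhds hX.eventually_exists)
    (Set.right_mem_Icc.2 hc)

theorem IsHurwitz.exists_posDef_riccati_eq (hA : IsHurwitz A) (hc : 0 ≤ c)
    (hdist : ∀ ω : ℝ, √c < sigmaMin (A.map Complex.ofReal - ((ω : ℂ) * Complex.I) • 1)) :
    ∃ d > c, ∃ X : Matrix (Fin n) (Fin n) ℝ, X.PosDef ∧ riccati A X = -(d • 1) := by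
  obtain ⟨X₀, hX₀⟩ := hA.exists_isStabilizingSolution hc hdist
  obtain ⟨d, hcd, X, hX⟩ := ((frequently_gt_nhds c).and_eventually hX₀.eventually_exists).exists
  exact ⟨d, hcd, X, hX.posDef hA (hc.trans_lt hcd), hX.riccati_eq⟩

end Riccati

/-- The matrix-algebraic core of Proposition 2 (Lemmas 1 and 2 combined): if `A` is
Hurwitz and `σ_min(A - iωI) > Ξ√N` for all `ω ∈ ℝ`, then the algebraic Riccati equation
`AᵀP + PA + N P² + (Ξ² + ε) I = 0` has a symmetric positive definite solution for some `ε > 0`. -/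
theorem stmt_3 (n : ℕ) (hn : 1 ≤ n) (A : Matrix (Fin n) (Fin n) ℝ)
    (hA : IsHurwitz A) (N Ξ : ℝ) (hN : 0 < N) (hΞ : 0 < Ξ)
    (hdist : ∀ ω : ℝ,
      Ξ * Real.sqrt N <
        sigmaMin (A.map Complex.ofReal -
          ((ω : ℂ) * Complex.I) • (1 : Matrix (Fin n) (Fin n) ℂ))) :
    ∃ ε : ℝ, 0 < ε ∧ ∃ P : Matrix (Fin n) (Fin n) ℝ, P.IsSymm ∧
      (∀ x : Fin n → ℝ, x ≠ 0 → 0 < x ⬝ᵥ P.mulVec x) ∧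
      Aᵀ * P + P * A + N • (P * P) + (Ξ ^ 2 + ε) • (1 : Matrix (Fin n) (Fin n) ℝ) = 0 := by
  have hsqrt : √(Ξ ^ 2 * N) = Ξ * √N := by
    rw [Real.sqrt_mul (sq_nonneg Ξ), Real.sqrt_sq hΞ.le]
  obtain ⟨d, hd, X, hX, hric⟩ :=
    hA.exists_posDef_riccati_eq (by positivity) fun ω => hsqrt.trans_lt (hdist ω)
  have hP : (N⁻¹ • X).PosDef := hX.smul (inv_pos.2 hN)
  refine ⟨d / N - Ξ ^ 2, sub_pos.2 ((lt_div_iff₀ hN).2 hd), N⁻¹ • X,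
    isHermitian_iff_isSymm.1 hP.isHermitian, fun x hx => hP.dotProduct_mulVec_pos hx, ?_⟩
  calc
    Aᵀ * N⁻¹ • X + N⁻¹ • X * A + N • (N⁻¹ • X * N⁻¹ • X) + (Ξ ^ 2 + (d / N - Ξ ^ 2)) • 1
      = N⁻¹ • (riccati A X + d • 1) := by
        rw [riccati, lyapunov, star_eq_conjTranspose, conjTranspose_eq_transpose_of_trivial,
          add_sub_cancel, div_eq_inv_mul]
        simp only [mul_smul_comm, smul_mul_assoc, smul_add, smul_smul, mul_inv_cancel_left₀ hN.ne']
    _ = 0 := by rw [hric, neg_add_cancel, smul_zero]
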